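/- Let δ ∈ ℝ with 1 < δ < 2, let α₀ ≥ 1/(δ−1) and α₁ ≥ 0, let γ₀, γ₁ ∈ ℝ, and let b, c, f : [0,1] → ℝ be continuous with c(x) ≥ 0 for all x ∈ [0,1]. Let u : [0,1] → ℝ be continuously differentiable on [0,1] and three times continuously differentiable on (0,1], with |u''(x)| ≤ C₀ x^{δ−2} and |u'''(x)| ≤ C₀ x^{δ−3} for all 0 < x ≤ 1 and some constant C₀, and assume u satisfies −D*^δ u(x) + b(x) u'(x) + c(x) u(x) = f(x) for all x ∈ (0,1), u(0) − α₀ u'(0) = γ₀, and u(1) + α₁ u'(1) = γ₁. For each integer N ≥ 3 set h = 1/N, x_j = jh, let A be the (N+1)×(N+1) discretization matrix defined by (Av)₀ = (1 + α₀/h) v₀ − (α₀/h) v₁, (Av)_N = −(α₁/h) v_{N−1} + (1 + α₁/h) v_N, and (Av)_j = −(1/(h^δ Γ(3−δ))) Σ_{k=0}^{j−1} d_{j−k}(v_{k+2} − 2v_{k+1} + v_k) + b(x_j) D^ℵ v_j + c(x_j) v_j for 1 ≤ j ≤ N−1, where d_r := (max(r,0))^{2−δ} − (max(r−1,0))^{2−δ}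 and D^ℵ v_j := (v_{j+1} − v_j)/h if b(x_j) < 0 and (v_j − v_{j−1})/h if b(x_j) ≥ 0, and let ū = (u₀, …, u_N) be the unique solution of A ū = (γ₀, f(x₁), …, f(x_{N−1}), γ₁)ᵀ. Then there exists a constant C, independent of N, such that max_{0 ≤ j ≤ N} |u(x_j) − u_j| ≤ C h^{δ−1}. -/

import Mathlib

/-- The coefficients `d_r = (max(r,0))^{2−δ} − (max(r−1,0))^{2−δ}` of the standard
discretization of the Caputo derivative of order `δ ∈ (1,2)`. -/
noncomputable def dCoef (δ : ℝ) (r : ℕ) : ℝ :=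
  (max (r:ℝ) 0) ^ (2 - δ) - (max ((r:ℝ) - 1) 0) ^ (2 - δ)

/-- First derivative within `[0,1]`. -/
noncomputable def du (u : ℝ → ℝ) : ℝ → ℝ := derivWithin u (Set.Icc 0 1)

/-- The Caputo fractional derivative of order `δ ∈ (1,2)`:
`D*^δ u (x) = (1/Γ(2-δ)) ∫₀ˣ (x-t)^(1-δ) u''(t) dt`. -/
noncomputable def caputoW (δ : ℝ) (u : ℝ → ℝ) (x : ℝ) : ℝ :=
  (1 / Real.Gamma (2 - δ)) *
    ∫ t in (0:ℝ)..x, (x - t) ^ (1 - δ) * du (du u) t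

/-!
The matrix obeys a discrete minimum principle, so the error is controlled by the truncation errors
of the rows. At a negative interior minimum the convection and reaction terms have the right sign;
in the discrete Caputo term, two summations by parts move the second difference to the weights
`d_r`, which are convex, so that only the coefficient of `v₁` can have the wrong sign. It is
absorbed by that of `v₀`: the left boundary row gives `v₁ ≤ (1 + h / α₀) v₀` after subtracting the
minimum, while `d_{r-1} ≥ (1 + (δ - 1) / r) d_r` and `1 / α₀ ≤ δ - 1`.

Since `u''` behaves like `x ^ (δ - 2)`, the truncation error at node `j` is only `O(j ^ (1 - δ))`.
The weights `d_j` decay at exactly this rate, and `d_j` is what the discrete Caputo operator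
returns at node `j` on a grid function that is constant except at node `0`. The constant `M`,
lowered by `ε ~ h ^ δ` at node `0`, is therefore a barrier for the interior errors; the boundary
row at `0` then forces `M ~ (α₀ / h) ε ~ h ^ (δ - 1)`.
-/

open Set MeasureTheory

section PowerKernel

variable {a b x : ℝ}

lemma rpow_mul_one_add_le_rpow_add {t s : ℝ} (ha : a ≤ 0) (ht : 0 < t) (hts : 0 < t + s) :
    t ^ a * (1 + a * (s / t)) ≤ (t + s) ^ a := by
  have hratio : 0 < 1 + s / t := by
    rw [← div_self ht.ne', ← add_div]
    exact div_pos hts ht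
  have hbernoulli : 1 + a * (s / t) ≤ (1 + s / t) ^ a := by
    rw [Real.rpow_def_of_pos hratio]
    have hlog : Real.log (1 + s / t) ≤ s / t := by linarith [Real.log_le_sub_one_of_pos hratio]
    nlinarith [Real.add_one_le_exp (Real.log (1 + s / t) * a), mul_le_mul_of_nonpos_left hlog ha]
  calc t ^ a * (1 + a * (s / t)) ≤ t ^ a * (1 + s / t) ^ a := by gcongr
    _ = (t + s) ^ a := by
      rw [← Real.mul_rpow ht.le hratio.le, mul_add, mul_one, mul_div_cancel₀ _ ht.ne']

lemma half_rpow_le {m : ℝ} (hx : 0 ≤ x) (ham : -m ≤ a) : (x / 2) ^ a ≤ 2 ^ m * x ^ a := by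
  rw [Real.div_rpow hx (by norm_num), div_eq_inv_mul, ← Real.rpow_neg (by norm_num)]
  gcongr
  · norm_num
  · linarith

-- One of the two factors is evaluated at an argument of size at least `x / 2`.
lemma sub_rpow_mul_rpow_le {t : ℝ} (ha : a ≤ 0) (hb : b ≤ 0) (ht : 0 ≤ t) (htx : t < x) :
    (x - t) ^ a * t ^ b ≤ (x / 2) ^ a * t ^ b + (x / 2) ^ b * (x - t) ^ a := by
  have hx : 0 < x := ht.trans_lt htx
  have : 0 < x - t := sub_pos.2 htx
  rcases le_or_gt t (x / 2) with hle | hgt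
  · have hfactor : (x - t) ^ a ≤ (x / 2) ^ a :=
      Real.rpow_le_rpow_of_nonpos (by positivity) (by linarith) ha
    exact (mul_le_mul_of_nonneg_right hfactor (by positivity)).trans
      (le_add_of_nonneg_right (by positivity))
  · have hfactor : t ^ b ≤ (x / 2) ^ b :=
      Real.rpow_le_rpow_of_nonpos (by positivity) hgt.le hb
    rw [mul_comm]
    exact (mul_le_mul_of_nonneg_right hfactor (by positivity)).trans
      (le_add_of_nonneg_left (by positivity))

lemma intervalIntegrable_sub_rpow (ha : -1 < a) (x l r : ℝ) :
    IntervalIntegrable (fun t => (x - t) ^ a) volume l r := by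
  simpa using (intervalIntegral.intervalIntegrable_rpow' ha
    (a := x - l) (b := x - r)).comp_sub_left x

lemma integral_sub_rpow (ha : -1 < a) (x l r : ℝ) :
    ∫ t in l..r, (x - t) ^ a = ((x - l) ^ (a + 1) - (x - r) ^ (a + 1)) / (a + 1) := by
  rw [intervalIntegral.integral_comp_sub_left (fun s => s ^ a), integral_rpow (Or.inl ha)]

/-- The integrable majorant of `t ↦ (x - t) ^ a * t ^ b` on `(0, x)` provided by
`sub_rpow_mul_rpow_le`. -/
noncomputable def betaMajorant (a b x t : ℝ) : ℝ :=
  (x / 2) ^ a * t ^ b + (x / 2) ^ b * (x - t) ^ a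

lemma intervalIntegrable_betaMajorant (ha : -1 < a) (hb : -1 < b) (x l r : ℝ) :
    IntervalIntegrable (betaMajorant a b x) volume l r :=
  ((intervalIntegral.intervalIntegrable_rpow' hb).const_mul _).add
    ((intervalIntegrable_sub_rpow ha x l r).const_mul _)

lemma integral_betaMajorant (ha : -1 < a) (hb : -1 < b) (x y : ℝ) :
    ∫ t in 0..y, betaMajorant a b x t =
      (x / 2) ^ a * (y ^ (b + 1) / (b + 1)) + (x / 2) ^ b * ∫ t in 0..y, (x - t) ^ a := by
  simp only [betaMajorant]
  rw [intervalIntegral.integral_add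
      ((intervalIntegral.intervalIntegrable_rpow' hb).const_mul _)
      ((intervalIntegrable_sub_rpow ha x 0 y).const_mul _),
    intervalIntegral.integral_const_mul, intervalIntegral.integral_const_mul,
    integral_rpow (Or.inl hb), Real.zero_rpow (by linarith), sub_zero]

variable {q : ℝ → ℝ} {C : ℝ}

lemma abs_sub_rpow_mul_le_betaMajorant (ha : a ≤ 0) (hb : b ≤ 0) (hC : 0 ≤ C)
    (hq : ∀ t ∈ Ioo 0 x, |q t| ≤ C * t ^ b) {t : ℝ} (ht : t ∈ Ioo 0 x) :
    |(x - t) ^ a * q t| ≤ C * betaMajorant a b x t := by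
  have hkernel : 0 ≤ (x - t) ^ a := Real.rpow_nonneg (sub_pos.2 ht.2).le a
  calc |(x - t) ^ a * q t| = (x - t) ^ a * |q t| := by rw [abs_mul, abs_of_nonneg hkernel]
    _ ≤ (x - t) ^ a * (C * t ^ b) := mul_le_mul_of_nonneg_left (hq t ht) hkernel
    _ = C * ((x - t) ^ a * t ^ b) := by ring
    _ ≤ C * betaMajorant a b x t :=
      mul_le_mul_of_nonneg_left (sub_rpow_mul_rpow_le ha hb ht.1.le ht.2) hC

lemma intervalIntegrable_sub_rpow_mul (ha : -1 < a) (ha0 : a ≤ 0) (hb : -1 < b) (hb0 : b ≤ 0)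
    (hC : 0 ≤ C) (hx : 0 ≤ x) (hqc : ContinuousOn q (Ioo 0 x))
    (hq : ∀ t ∈ Ioo 0 x, |q t| ≤ C * t ^ b) :
    IntervalIntegrable (fun t => (x - t) ^ a * q t) volume 0 x := by
  have hmajorant := (intervalIntegrable_betaMajorant ha hb x 0 x).const_mul C
  rw [intervalIntegrable_iff_integrableOn_Ioo_of_le hx] at hmajorant ⊢
  refine Integrable.mono' hmajorant (ContinuousOn.aestronglyMeasurable ?_ measurableSet_Ioo) ?_
  · refine ContinuousOn.mul (ContinuousOn.rpow_const (by fun_prop) ?_) hqc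
    exact fun t ht => Or.inl (sub_pos.2 ht.2).ne'
  · exact (ae_restrict_iff' measurableSet_Ioo).2
      (Filter.Eventually.of_forall fun t => abs_sub_rpow_mul_le_betaMajorant ha0 hb0 hC hq)

lemma abs_integral_le_of_abs_le_on_Ioo {f g : ℝ → ℝ} {l r : ℝ} (hlr : l ≤ r)
    (hfg : ∀ t ∈ Ioo l r, |f t| ≤ g t) (hg : IntervalIntegrable g volume l r) :
    |∫ t in l..r, f t| ≤ ∫ t in l..r, g t := by
  rw [← Real.norm_eq_abs]
  refine intervalIntegral.norm_integral_le_of_norm_le hlr ?_ hg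
  filter_upwards [Measure.ae_ne volume r] with t htr ht
  exact hfg t ⟨ht.1, lt_of_le_of_ne ht.2 htr⟩

lemma abs_integral_sub_rpow_mul_sub_le {l r Q ε : ℝ} (ha : -1 < a) (hlr : l ≤ r) (hrx : r ≤ x)
    (hq : ∀ t ∈ Ioo l r, |q t - Q| ≤ ε)
    (hint : IntervalIntegrable (fun t => (x - t) ^ a * q t) volume l r) :
    |(∫ t in l..r, (x - t) ^ a * q t) - (∫ t in l..r, (x - t) ^ a) * Q| ≤
      (∫ t in l..r, (x - t) ^ a) * ε := by
  have hkernel := intervalIntegrable_sub_rpow ha x l r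
  rw [← intervalIntegral.integral_mul_const, ← intervalIntegral.integral_mul_const,
    ← intervalIntegral.integral_sub hint (hkernel.mul_const Q)]
  refine abs_integral_le_of_abs_le_on_Ioo hlr (fun t ht => ?_) (hkernel.mul_const ε)
  have hpos : 0 ≤ (x - t) ^ a := Real.rpow_nonneg (by linarith [ht.2]) a
  rw [← mul_sub, abs_mul, abs_of_nonneg hpos]
  exact mul_le_mul_of_nonneg_left (hq t ht) hpos

end PowerKernel

section Weights

variable {δ : ℝ}

lemma dCoef_eq {r : ℕ} (hr : 1 ≤ r) :
    dCoef δ r = (r : ℝ) ^ (2 - δ) - ((r : ℝ) - 1) ^ (2 - δ) := by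
  have hr' : (1 : ℝ) ≤ r := by exact_mod_cast hr
  rw [dCoef, max_eq_left (by linarith), max_eq_left (by linarith)]

lemma integral_cell_eq_dCoef (hδ : δ < 2) {h : ℝ} (hh : 0 ≤ h) {j k : ℕ} (hkj : k < j) :
    ∫ t in (k * h)..((k + 1 : ℕ) * h), (j * h - t) ^ (1 - δ) =
      h ^ (2 - δ) / (2 - δ) * dCoef δ (j - k) := by
  have hkj' : (k : ℝ) + 1 ≤ j := by exact_mod_cast hkj
  have hleft : j * h - k * h = ((j : ℝ) - k) * h := by ring
  have hright : j * h - (k + 1 : ℕ) * h = ((j : ℝ) - k - 1) * h := by push_cast; ring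
  rw [integral_sub_rpow (by linarith), dCoef_eq (by omega), Nat.cast_sub hkj.le, hleft, hright,
    show 1 - δ + 1 = 2 - δ by ring, Real.mul_rpow (by linarith) hh, Real.mul_rpow (by linarith) hh]
  ring

lemma dCoef_eq_integral (hδ : δ < 2) {r : ℕ} (hr : 1 ≤ r) :
    dCoef δ r = (2 - δ) * ∫ s in (0 : ℝ)..1, (r - s) ^ (1 - δ) := by
  have hcell := integral_cell_eq_dCoef hδ zero_le_one hr
  simp only [CharP.cast_eq_zero, zero_add, Nat.cast_one, mul_one, Real.one_rpow,
    Nat.sub_zero] at hcell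
  rw [hcell, ← mul_assoc, mul_one_div_cancel (by linarith), one_mul]

lemma mul_rpow_le_dCoef (hδ1 : 1 ≤ δ) (hδ2 : δ < 2) {r : ℕ} (hr : 1 ≤ r) :
    (2 - δ) * (r : ℝ) ^ (1 - δ) ≤ dCoef δ r := by
  have hr' : (1 : ℝ) ≤ r := by exact_mod_cast hr
  rw [dCoef_eq_integral hδ2 hr]
  refine mul_le_mul_of_nonneg_left ?_ (by linarith)
  calc (r : ℝ) ^ (1 - δ) = ∫ _ in (0 : ℝ)..1, (r : ℝ) ^ (1 - δ) := by simp
    _ ≤ ∫ s in (0 : ℝ)..1, (r - s) ^ (1 - δ) :=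
      intervalIntegral.integral_mono_on_of_le_Ioo zero_le_one intervalIntegrable_const
        (intervalIntegrable_sub_rpow (by linarith) _ _ _) fun s hs =>
          Real.rpow_le_rpow_of_nonpos (by linarith [hs.2]) (by linarith [hs.1]) (by linarith)

lemma dCoef_le_rpow (hδ1 : 1 ≤ δ) (hδ2 : δ < 2) {r : ℕ} (hr : 1 ≤ r) :
    dCoef δ r ≤ (r : ℝ) ^ (1 - δ) := by
  have hr' : (1 : ℝ) ≤ r := by exact_mod_cast hr
  have hsplit {t : ℝ} (ht : 0 ≤ t) : t ^ (2 - δ) = t * t ^ (1 - δ) := by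
    rw [show 2 - δ = 1 + (1 - δ) by ring, Real.rpow_one_add' ht (by linarith)]
  have hlast : ((r : ℝ) - 1) * (r : ℝ) ^ (1 - δ) ≤ ((r : ℝ) - 1) ^ (2 - δ) := by
    rw [hsplit (sub_nonneg.2 hr')]
    rcases hr'.eq_or_lt with hone | hlt
    · simp [← hone]
    · exact mul_le_mul_of_nonneg_left
        (Real.rpow_le_rpow_of_nonpos (by linarith) (by linarith) (by linarith)) (by linarith)
  rw [dCoef_eq hr, hsplit (by linarith)]
  linarith

lemma dCoef_pos (hδ1 : 1 ≤ δ) (hδ2 : δ < 2) {r : ℕ} (hr : 1 ≤ r) : 0 < dCoef δ r := by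
  have hr' : (0 : ℝ) < r := by exact_mod_cast hr
  exact (mul_pos (by linarith) (Real.rpow_pos_of_pos hr' _)).trans_le (mul_rpow_le_dCoef hδ1 hδ2 hr)

lemma two_mul_dCoef_le_add (hδ1 : 1 ≤ δ) (hδ2 : δ < 2) (r : ℕ) :
    2 * dCoef δ (r + 2) ≤ dCoef δ (r + 1) + dCoef δ (r + 3) := by
  have hint (x : ℝ) := intervalIntegrable_sub_rpow (a := 1 - δ) (by linarith) x 0 1
  have hmono : ∫ s in (0 : ℝ)..1, 2 * ((r + 2 : ℕ) - s) ^ (1 - δ) ≤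
      ∫ s in (0 : ℝ)..1, (((r + 1 : ℕ) - s) ^ (1 - δ) + ((r + 3 : ℕ) - s) ^ (1 - δ)) := by
    refine intervalIntegral.integral_mono_on_of_le_Ioo zero_le_one ((hint _).const_mul 2)
      ((hint _).add (hint _)) fun s hs => ?_
    have ht : 1 < ((r + 2 : ℕ) : ℝ) - s := by
      have : (0 : ℝ) ≤ r := r.cast_nonneg
      push_cast
      linarith [hs.2]
    have hleft := rpow_mul_one_add_le_rpow_add (a := 1 - δ) (s := -1) (by linarith)
      (one_pos.trans ht) (by linarith)
    have hright := rpow_mul_one_add_le_rpow_add (a := 1 - δ) (s := 1) (by linarith)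
      (one_pos.trans ht) (by linarith)
    rw [show ((r + 1 : ℕ) : ℝ) - s = (r + 2 : ℕ) - s + -1 by push_cast; ring,
      show ((r + 3 : ℕ) : ℝ) - s = (r + 2 : ℕ) - s + 1 by push_cast; ring]
    rw [neg_div] at hleft
    linarith
  rw [intervalIntegral.integral_const_mul, intervalIntegral.integral_add (hint _) (hint _)] at hmono
  rw [dCoef_eq_integral hδ2 (by omega), dCoef_eq_integral hδ2 (by omega),
    dCoef_eq_integral hδ2 (by omega)]
  nlinarith

lemma one_add_div_mul_dCoef_le (hδ1 : 1 ≤ δ) (hδ2 : δ < 2) (r : ℕ) :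
    (1 + (δ - 1) / (r + 2 : ℕ)) * dCoef δ (r + 2) ≤ dCoef δ (r + 1) := by
  have hint (x : ℝ) := intervalIntegrable_sub_rpow (a := 1 - δ) (by linarith) x 0 1
  have hmono : ∫ s in (0 : ℝ)..1, (1 + (δ - 1) / (r + 2 : ℕ)) * ((r + 2 : ℕ) - s) ^ (1 - δ) ≤
      ∫ s in (0 : ℝ)..1, ((r + 1 : ℕ) - s) ^ (1 - δ) := by
    refine intervalIntegral.integral_mono_on_of_le_Ioo zero_le_one ((hint _).const_mul _)
      (hint _) fun s hs => ?_
    have ht : 1 < ((r + 2 : ℕ) : ℝ) - s := by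
      have : (0 : ℝ) ≤ r := r.cast_nonneg
      push_cast
      linarith [hs.2]
    have hdiv : (δ - 1) / (r + 2 : ℕ) ≤ (δ - 1) / ((r + 2 : ℕ) - s) :=
      div_le_div_of_nonneg_left (by linarith) (by linarith) (by linarith [hs.1])
    calc (1 + (δ - 1) / (r + 2 : ℕ)) * ((r + 2 : ℕ) - s) ^ (1 - δ)
        ≤ (1 + (δ - 1) / ((r + 2 : ℕ) - s)) * ((r + 2 : ℕ) - s) ^ (1 - δ) := by
          gcongr
      _ = ((r + 2 : ℕ) - s) ^ (1 - δ) * (1 + (1 - δ) * (-1 / ((r + 2 : ℕ) - s))) := by ring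
      _ ≤ ((r + 2 : ℕ) - s + -1) ^ (1 - δ) :=
        rpow_mul_one_add_le_rpow_add (by linarith) (by linarith) (by linarith)
      _ = ((r + 1 : ℕ) - s) ^ (1 - δ) := by push_cast; ring_nf
  rw [intervalIntegral.integral_const_mul] at hmono
  rw [dCoef_eq_integral hδ2 (by omega), dCoef_eq_integral hδ2 (by omega), mul_left_comm]
  exact mul_le_mul_of_nonneg_left hmono (by linarith)

lemma sum_dCoef (hδ : δ < 2) (j : ℕ) :
    ∑ k ∈ Finset.range j, dCoef δ (j - k) = (j : ℝ) ^ (2 - δ) := by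
  calc ∑ k ∈ Finset.range j, dCoef δ (j - k) = ∑ k ∈ Finset.range j, dCoef δ (k + 1) := by
        rw [← Finset.sum_range_reflect]
        refine Finset.sum_congr rfl fun k hk => ?_
        have := Finset.mem_range.1 hk
        congr 1
        omega
    _ = ∑ k ∈ Finset.range j, (((k + 1 : ℕ) : ℝ) ^ (2 - δ) - (k : ℝ) ^ (2 - δ)) :=
        Finset.sum_congr rfl fun k _ => by rw [dCoef_eq (by omega)]; simp
    _ = (j : ℝ) ^ (2 - δ) := by
        rw [Finset.sum_range_sub fun k : ℕ => (k : ℝ) ^ (2 - δ), Nat.cast_zero,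
          Real.zero_rpow (by linarith), sub_zero]

lemma rpow_mul_dCoef_le {β : ℝ} (hβ : β ≤ 0) (hδ1 : 1 ≤ δ) (hδ2 : δ < 2) {j k : ℕ} (hkj : k < j) :
    (k : ℝ) ^ β * dCoef δ (j - k) ≤
      (j / 2 : ℝ) ^ (1 - δ) * (k : ℝ) ^ β + (j / 2 : ℝ) ^ β / (2 - δ) * dCoef δ (j - k) := by
  have hupper := dCoef_le_rpow hδ1 hδ2 (r := j - k) (by omega)
  have hlower := mul_rpow_le_dCoef hδ1 hδ2 (r := j - k) (by omega)
  rw [Nat.cast_sub hkj.le] at hupper hlower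
  have hlower' : ((j : ℝ) - k) ^ (1 - δ) ≤ dCoef δ (j - k) / (2 - δ) := by
    rw [le_div_iff₀ (by linarith)]
    linarith
  calc (k : ℝ) ^ β * dCoef δ (j - k)
      ≤ ((j : ℝ) - k) ^ (1 - δ) * (k : ℝ) ^ β := by rw [mul_comm]; gcongr
    _ ≤ (j / 2 : ℝ) ^ (1 - δ) * (k : ℝ) ^ β + (j / 2 : ℝ) ^ β * ((j : ℝ) - k) ^ (1 - δ) :=
        sub_rpow_mul_rpow_le (by linarith) hβ k.cast_nonneg (by exact_mod_cast hkj)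
    _ ≤ (j / 2 : ℝ) ^ (1 - δ) * (k : ℝ) ^ β +
          (j / 2 : ℝ) ^ β * (dCoef δ (j - k) / (2 - δ)) := by gcongr
    _ = _ := by ring

lemma sum_rpow_mul_dCoef_le {β : ℝ} (hβ : β ≤ 0) (hδ1 : 1 ≤ δ) (hδ2 : δ < 2) (j : ℕ) :
    ∑ k ∈ Finset.range j, (k : ℝ) ^ β * dCoef δ (j - k) ≤
      (j / 2 : ℝ) ^ (1 - δ) * ∑ k ∈ Finset.range j, (k : ℝ) ^ β +
        (j / 2 : ℝ) ^ β / (2 - δ) * (j : ℝ) ^ (2 - δ) := by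
  rw [← sum_dCoef hδ2 j, Finset.mul_sum, Finset.mul_sum, ← Finset.sum_add_distrib]
  exact Finset.sum_le_sum fun k hk => rpow_mul_dCoef_le hβ hδ1 hδ2 (Finset.mem_range.1 hk)

lemma exists_sum_rpow_mul_dCoef_le {β : ℝ} (hβ : β < -1) (hδ1 : 1 ≤ δ) (hδ2 : δ < 2) :
    ∃ Z : ℝ, 0 ≤ Z ∧ ∀ j : ℕ, 1 ≤ j →
      ∑ k ∈ Finset.Ico 1 j, (k : ℝ) ^ β * dCoef δ (j - k) ≤ Z * (j : ℝ) ^ (1 - δ) := by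
  have : 0 < 2 - δ := by linarith
  have hsummable : Summable fun k : ℕ => (k : ℝ) ^ β := Real.summable_nat_rpow.2 hβ
  set S := ∑' k : ℕ, (k : ℝ) ^ β
  have : 0 ≤ S := tsum_nonneg fun k => by positivity
  refine ⟨2 * S + 2 ^ (-β) / (2 - δ), by positivity, fun j hj => ?_⟩
  have hj1 : (1 : ℝ) ≤ j := by exact_mod_cast hj
  have hj0 : (0 : ℝ) < j := by linarith
  have hfar : (j / 2 : ℝ) ^ (1 - δ) ≤ 2 * (j : ℝ) ^ (1 - δ) := by
    simpa using half_rpow_le (a := 1 - δ) (m := 1) hj0.le (by linarith)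
  have hnear : (j : ℝ) ^ β * (j : ℝ) ^ (2 - δ) ≤ (j : ℝ) ^ (1 - δ) := by
    rw [← Real.rpow_add hj0]
    exact Real.rpow_le_rpow_of_exponent_le hj1 (by linarith)
  calc ∑ k ∈ Finset.Ico 1 j, (k : ℝ) ^ β * dCoef δ (j - k)
      ≤ ∑ k ∈ Finset.range j, (k : ℝ) ^ β * dCoef δ (j - k) := by
        rw [Finset.range_eq_Ico]
        refine Finset.sum_le_sum_of_subset_of_nonneg
          (Finset.Ico_subset_Ico_left zero_le_one) fun k hk _ => ?_
        have := Finset.mem_Ico.1 hk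
        exact mul_nonneg (by positivity) (dCoef_pos hδ1 hδ2 (by omega)).le
    _ ≤ (j / 2 : ℝ) ^ (1 - δ) * ∑ k ∈ Finset.range j, (k : ℝ) ^ β +
          (j / 2 : ℝ) ^ β / (2 - δ) * (j : ℝ) ^ (2 - δ) :=
        sum_rpow_mul_dCoef_le (by linarith) hδ1 hδ2 j
    _ ≤ 2 * (j : ℝ) ^ (1 - δ) * S + 2 ^ (-β) * (j : ℝ) ^ β / (2 - δ) * (j : ℝ) ^ (2 - δ) := by
        gcongr
        · exact hsummable.sum_le_tsum _ fun k _ => by positivity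
        · exact half_rpow_le hj0.le (by linarith)
    _ = 2 * S * (j : ℝ) ^ (1 - δ) +
          2 ^ (-β) / (2 - δ) * ((j : ℝ) ^ β * (j : ℝ) ^ (2 - δ)) := by ring
    _ ≤ 2 * S * (j : ℝ) ^ (1 - δ) + 2 ^ (-β) / (2 - δ) * (j : ℝ) ^ (1 - δ) := by gcongr
    _ = _ := by ring

end Weights

section Scheme

/-- The discrete Caputo operator at node `j`, up to its scaling: the convolution of the weights `d`
with the second differences of a grid function. -/
def convSecondDiff (d : ℕ → ℝ) (j : ℕ) : (ℕ → ℝ) →ₗ[ℝ] ℝ where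
  toFun v := ∑ k ∈ Finset.range j, d (j - k) * (v (k + 2) - 2 * v (k + 1) + v k)
  map_add' v w := by
    rw [← Finset.sum_add_distrib]
    exact Finset.sum_congr rfl fun k _ => by simp only [Pi.add_apply]; ring
  map_smul' s v := by
    rw [smul_eq_mul, Finset.mul_sum]
    exact Finset.sum_congr rfl fun k _ => by
      simp only [Pi.smul_apply, smul_eq_mul, RingHom.id_apply]; ring

/-- The upwind difference quotient `D^ℵ` at node `j` on a mesh of width `h`, for a convection
coefficient with value `β` at that node. -/
noncomputable def upwindDiff (h β : ℝ) (j : ℕ) : (ℕ → ℝ) →ₗ[ℝ] ℝ where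
  toFun v := if β < 0 then (v (j + 1) - v j) / h else (v j - v (j - 1)) / h
  map_add' v w := by simp only [Pi.add_apply]; split_ifs <;> ring
  map_smul' s v := by simp only [Pi.smul_apply, smul_eq_mul, RingHom.id_apply]; split_ifs <;> ring

/-- The row of the discretization matrix at the left end point, with `a = α₀ / h`. -/
def leftRow (a : ℝ) : (ℕ → ℝ) →ₗ[ℝ] ℝ where
  toFun v := (1 + a) * v 0 - a * v 1
  map_add' v w := by simp only [Pi.add_apply]; ring
  map_smul' s v := by simp only [Pi.smul_apply, smul_eq_mul, RingHom.id_apply]; ring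

/-- The row of the discretization matrix at the right end point, with `a = α₁ / h`. -/
def rightRow (a : ℝ) (N : ℕ) : (ℕ → ℝ) →ₗ[ℝ] ℝ where
  toFun v := -a * v (N - 1) + (1 + a) * v N
  map_add' v w := by simp only [Pi.add_apply]; ring
  map_smul' s v := by simp only [Pi.smul_apply, smul_eq_mul, RingHom.id_apply]; ring

/-- The row of the discretization matrix at the interior node `j`; the scheme has
`κ = 1 / (h ^ δ * Γ(3 - δ))`, the weights `d = dCoef δ`, and the values `β = b (x_j)` and
`γ = c (x_j)` of the coefficients. -/
noncomputable def interiorRow (κ h : ℝ) (d : ℕ → ℝ) (β γ : ℝ) (j : ℕ) : (ℕ → ℝ) →ₗ[ℝ] ℝ :=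
  -κ • convSecondDiff d j + β • upwindDiff h β j + γ • LinearMap.proj j

lemma interiorRow_apply (κ h : ℝ) (d : ℕ → ℝ) (β γ : ℝ) (j : ℕ) (v : ℕ → ℝ) :
    interiorRow κ h d β γ j v =
      -κ * convSecondDiff d j v + β * upwindDiff h β j v + γ * v j := rfl

variable {d : ℕ → ℝ}

lemma convSecondDiff_apply (j : ℕ) (v : ℕ → ℝ) :
    convSecondDiff d j v =
      ∑ k ∈ Finset.range j, d (j - k) * (v (k + 2) - 2 * v (k + 1) + v k) := rfl

lemma convSecondDiff_const (m : ℝ) (j : ℕ) : convSecondDiff d j (fun _ => m) = 0 := by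
  rw [convSecondDiff_apply]
  exact Finset.sum_eq_zero fun _ _ => by ring

lemma sum_mul_secondDiff (e y : ℕ → ℝ) (n : ℕ) :
    ∑ k ∈ Finset.range (n + 2), e k * (y (k + 2) - 2 * y (k + 1) + y k) =
      e (n + 1) * y (n + 3) + (e n - 2 * e (n + 1)) * y (n + 2)
        + ∑ k ∈ Finset.range n, (e (k + 2) - 2 * e (k + 1) + e k) * y (k + 2)
        + (e 1 - 2 * e 0) * y 1 + e 0 * y 0 := by
  induction n with
  | zero => simp only [Finset.sum_range_succ, Finset.sum_range_zero]; ring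
  | succ n ih => rw [Finset.sum_range_succ, ih, Finset.sum_range_succ]; ring

lemma convSecondDiff_add_two (n : ℕ) (y : ℕ → ℝ) :
    convSecondDiff d (n + 2) y =
      d 1 * y (n + 3) + (d 2 - 2 * d 1) * y (n + 2)
        + ∑ k ∈ Finset.range n, (d (n - k) - 2 * d (n - k + 1) + d (n - k + 2)) * y (k + 2)
        + (d (n + 1) - 2 * d (n + 2)) * y 1 + d (n + 2) * y 0 := by
  have hsum : ∑ k ∈ Finset.range n, (d (n - k) - 2 * d (n - k + 1) + d (n - k + 2)) * y (k + 2) =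
      ∑ k ∈ Finset.range n,
        (d (n + 2 - (k + 2)) - 2 * d (n + 2 - (k + 1)) + d (n + 2 - k)) * y (k + 2) := by
    refine Finset.sum_congr rfl fun k hk => ?_
    have := Finset.mem_range.1 hk
    rw [show n + 2 - (k + 2) = n - k by omega, show n + 2 - (k + 1) = n - k + 1 by omega,
      show n + 2 - k = n - k + 2 by omega]
  have hparts := sum_mul_secondDiff (fun k => d (n + 2 - k)) y n
  rw [show n + 2 - (n + 1) = 1 by omega, show n + 2 - n = 2 by omega, ← hsum] at hparts
  exact hparts

-- The coefficient `D₁ - 2 * D₂` of `y₁` is negative for slowly decaying weights; the boundary row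
-- at `0` bounds `y₁` by `(1 + ρ) * y₀`, which leaves the coefficient `D₁ - (1 + ρ) * D₂ ≥ 0`.
lemma sub_two_mul_mul_add_mul_nonneg {ρ D₁ D₂ y₀ y₁ : ℝ} (hρ : 0 ≤ ρ) (hD₂ : 0 ≤ D₂) (hy₁ : 0 ≤ y₁)
    (hD : (1 + ρ) * D₂ ≤ D₁) (hy : y₁ ≤ (1 + ρ) * y₀) : 0 ≤ (D₁ - 2 * D₂) * y₁ + D₂ * y₀ := by
  have hy₀ : (1 - ρ) * y₁ ≤ y₀ := by
    refine le_of_mul_le_mul_left ?_ (by linarith : 0 < 1 + ρ)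
    nlinarith [mul_nonneg (mul_nonneg hρ hρ) hy₁]
  nlinarith [mul_le_mul_of_nonneg_left hy₀ hD₂, mul_le_mul_of_nonneg_right hD hy₁]

lemma convSecondDiff_nonneg_of_eq_zero {ρ : ℝ} {y : ℕ → ℝ} {i : ℕ} (hd : ∀ r, 0 ≤ d (r + 1))
    (hconvex : ∀ r, 2 * d (r + 2) ≤ d (r + 1) + d (r + 3)) (hρ : 0 ≤ ρ)
    (hratio : ∀ n, i = n + 2 → (1 + ρ) * d (n + 2) ≤ d (n + 1)) (hi : 1 ≤ i)
    (hy : ∀ k ≤ i + 1, 0 ≤ y k) (hyi : y i = 0) (hy₁ : y 1 ≤ (1 + ρ) * y 0) :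
    0 ≤ convSecondDiff d i y := by
  obtain rfl | ⟨n, rfl⟩ : i = 1 ∨ ∃ n, i = n + 2 := by
    rcases hi.eq_or_lt with hone | htwo
    · exact Or.inl hone.symm
    · exact Or.inr ⟨i - 2, by omega⟩
  · rw [convSecondDiff_apply, Finset.sum_range_one, hyi]
    exact mul_nonneg (hd 0) (by linarith [hy 2 le_rfl, hy 0 (by omega)])
  have hbulk : 0 ≤ ∑ k ∈ Finset.range n,
      (d (n - k) - 2 * d (n - k + 1) + d (n - k + 2)) * y (k + 2) := by
    refine Finset.sum_nonneg fun k hk => ?_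
    have := Finset.mem_range.1 hk
    have hconvex' := hconvex (n - k - 1)
    rw [show n - k - 1 + 1 = n - k by omega, show n - k - 1 + 2 = n - k + 1 by omega,
      show n - k - 1 + 3 = n - k + 2 by omega] at hconvex'
    exact mul_nonneg (by linarith) (hy _ (by omega))
  have hleft := sub_two_mul_mul_add_mul_nonneg hρ (hd (n + 1)) (hy 1 (by omega)) (hratio n rfl) hy₁
  have hright := mul_nonneg (hd 0) (hy (n + 3) le_rfl)
  rw [convSecondDiff_add_two, hyi]
  simp only [zero_add, mul_zero, add_zero] at hright ⊢
  linarith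

lemma mul_upwindDiff_nonpos_of_le {h β : ℝ} {j : ℕ} {v : ℕ → ℝ} (hh : 0 ≤ h)
    (hnext : v j ≤ v (j + 1)) (hprev : v j ≤ v (j - 1)) : β * upwindDiff h β j v ≤ 0 := by
  rcases lt_or_ge β 0 with hβ | hβ
  · rw [show upwindDiff h β j v = (v (j + 1) - v j) / h from if_pos hβ]
    exact mul_nonpos_of_nonpos_of_nonneg hβ.le (div_nonneg (by linarith) hh)
  · rw [show upwindDiff h β j v = (v j - v (j - 1)) / h from if_neg hβ.not_gt]
    exact mul_nonpos_of_nonneg_of_nonpos hβ (div_nonpos_of_nonpos_of_nonneg (by linarith) hh)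

variable {κ h a₀ a₁ : ℝ} {N : ℕ} {b c v : ℕ → ℝ}

lemma interiorRow_nonpos_of_min_nonpos {i : ℕ} {β γ : ℝ} (hd : ∀ r, 0 ≤ d (r + 1))
    (hconvex : ∀ r, 2 * d (r + 2) ≤ d (r + 1) + d (r + 3)) (ha₀ : 0 < a₀)
    (hratio : ∀ n, i = n + 2 → (1 + a₀⁻¹) * d (n + 2) ≤ d (n + 1)) (hκ : 0 ≤ κ) (hh : 0 ≤ h)
    (hγ : 0 ≤ γ) (hi : 1 ≤ i) (hmin : ∀ k ≤ i + 1, v i ≤ v k) (hv : v i ≤ 0)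
    (hleft : 0 ≤ leftRow a₀ v) : interiorRow κ h d β γ i v ≤ 0 := by
  have hcaputo : 0 ≤ convSecondDiff d i v := by
    have hshift : v 1 - v i ≤ (1 + a₀⁻¹) * (v 0 - v i) := by
      have hleft' : 0 ≤ (1 + a₀) * v 0 - a₀ * v 1 := hleft
      refine le_of_mul_le_mul_left ?_ ha₀
      rw [← mul_assoc, mul_add, mul_inv_cancel₀ ha₀.ne']
      linarith
    have hnonneg := convSecondDiff_nonneg_of_eq_zero (y := v - fun _ => v i) hd hconvex
      (inv_nonneg.2 ha₀.le) hratio hi (fun k hk => sub_nonneg.2 (hmin k hk)) (sub_self _) hshift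
    rwa [map_sub, convSecondDiff_const, sub_zero] at hnonneg
  have hconvection := mul_upwindDiff_nonpos_of_le (β := β) hh (hmin (i + 1) le_rfl)
    (hmin (i - 1) (by omega))
  rw [interiorRow_apply]
  linarith [mul_nonneg hκ hcaputo, mul_nonpos_of_nonneg_of_nonpos hγ hv]

theorem nonneg_of_rows_nonneg (hd : ∀ r, 0 ≤ d (r + 1))
    (hconvex : ∀ r, 2 * d (r + 2) ≤ d (r + 1) + d (r + 3)) (ha₀ : 0 < a₀) (ha₁ : 0 ≤ a₁)
    (hratio : ∀ n, n + 2 < N → (1 + a₀⁻¹) * d (n + 2) ≤ d (n + 1)) (hκ : 0 ≤ κ) (hh : 0 ≤ h)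
    (hN : 0 < N) (hc : ∀ j, 1 ≤ j → j < N → 0 ≤ c j) (hleft : 0 ≤ leftRow a₀ v)
    (hinterior : ∀ j, 1 ≤ j → j < N → 0 < interiorRow κ h d (b j) (c j) j v)
    (hright : 0 ≤ rightRow a₁ N v) {j : ℕ} (hj : j ≤ N) : 0 ≤ v j := by
  obtain ⟨i, hi, hmin⟩ := Finset.exists_min_image (Finset.range (N + 1)) v ⟨0, by simp⟩
  have hiN : i ≤ N := Finset.mem_range_succ_iff.1 hi
  replace hmin : ∀ k ≤ N, v i ≤ v k := fun k hk => hmin k (Finset.mem_range_succ_iff.2 hk)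
  refine le_trans ?_ (hmin j hj)
  by_contra! hneg
  obtain rfl | rfl | ⟨hi0, hlt⟩ : i = 0 ∨ i = N ∨ 1 ≤ i ∧ i < N := by omega
  · have hleft' : 0 ≤ (1 + a₀) * v 0 - a₀ * v 1 := hleft
    nlinarith [hmin 1 hN]
  · have hright' : 0 ≤ -a₁ * v (i - 1) + (1 + a₁) * v i := hright
    nlinarith [hmin (i - 1) (by omega)]
  · exact (hinterior i hi0 hlt).not_ge <| interiorRow_nonpos_of_min_nonpos hd hconvex ha₀
      (fun n hn => hratio n (hn ▸ hlt)) hκ hh (hc i hi0 hlt) hi0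
      (fun k hk => hmin k (by omega)) hneg.le hleft

/-- The barrier of the stability estimate: the constant `M`, lowered by `ε` at the node `0`. -/
def barrier (M ε : ℝ) (k : ℕ) : ℝ := if k = 0 then M - ε else M

lemma barrier_zero (M ε : ℝ) : barrier M ε 0 = M - ε := if_pos rfl

lemma barrier_of_pos (M ε : ℝ) {k : ℕ} (hk : 0 < k) : barrier M ε k = M := if_neg hk.ne'

lemma barrier_le {M ε : ℝ} (hε : 0 ≤ ε) (k : ℕ) : barrier M ε k ≤ M := by
  rw [barrier]
  split_ifs <;> linarith

lemma leftRow_barrier (M ε : ℝ) : leftRow a₀ (barrier M ε) = M - (1 + a₀) * ε := by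
  change (1 + a₀) * barrier M ε 0 - a₀ * barrier M ε 1 = _
  rw [barrier_zero, barrier_of_pos M ε one_pos]
  ring

lemma le_rightRow_barrier {M ε : ℝ} (hε : 0 ≤ ε) (ha₁ : 0 ≤ a₁) (hN : 0 < N) :
    M ≤ rightRow a₁ N (barrier M ε) := by
  change M ≤ -a₁ * barrier M ε (N - 1) + (1 + a₁) * barrier M ε N
  rw [barrier_of_pos M ε hN]
  linarith [mul_le_mul_of_nonneg_left (barrier_le (M := M) hε (N - 1)) ha₁]

lemma convSecondDiff_barrier (M ε : ℝ) {j : ℕ} (hj : 1 ≤ j) :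
    convSecondDiff d j (barrier M ε) = -(ε * d j) := by
  rw [convSecondDiff_apply, Finset.sum_eq_single_of_mem 0 (Finset.mem_range.2 hj)]
  · simp only [barrier_of_pos M ε (Nat.succ_pos _), barrier_zero, Nat.sub_zero]
    ring
  · intro k _ hk
    simp only [barrier_of_pos M ε (Nat.succ_pos _), barrier_of_pos M ε (Nat.pos_of_ne_zero hk)]
    ring

lemma le_interiorRow_barrier {M ε β γ : ℝ} {j : ℕ} (hh : 0 ≤ h) (hM : 0 ≤ M) (hε : 0 ≤ ε)
    (hγ : 0 ≤ γ) (hj : 1 ≤ j) : κ * ε * d j ≤ interiorRow κ h d β γ j (barrier M ε) := by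
  have hconvection : β * upwindDiff h β j (-barrier M ε) ≤ 0 := by
    refine mul_upwindDiff_nonpos_of_le hh ?_ ?_ <;>
      rw [Pi.neg_apply, Pi.neg_apply, barrier_of_pos M ε hj] <;>
      exact neg_le_neg (barrier_le hε _)
  rw [map_neg] at hconvection
  rw [interiorRow_apply, convSecondDiff_barrier M ε hj, barrier_of_pos M ε hj]
  linarith [mul_nonneg hγ hM]

theorem abs_le_of_abs_rows_le {σ ε : ℝ} {e : ℕ → ℝ} (hd : ∀ r, 0 ≤ d (r + 1))
    (hconvex : ∀ r, 2 * d (r + 2) ≤ d (r + 1) + d (r + 3)) (ha₀ : 0 < a₀) (ha₁ : 0 ≤ a₁)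
    (hratio : ∀ n, n + 2 < N → (1 + a₀⁻¹) * d (n + 2) ≤ d (n + 1)) (hκ : 0 ≤ κ) (hh : 0 ≤ h)
    (hN : 0 < N) (hc : ∀ j, 1 ≤ j → j < N → 0 ≤ c j) (hε : 0 ≤ ε)
    (hleft : |leftRow a₀ e| ≤ σ)
    (hinterior : ∀ j, 1 ≤ j → j < N → |interiorRow κ h d (b j) (c j) j e| < κ * ε * d j)
    (hright : |rightRow a₁ N e| ≤ σ) {j : ℕ} (hj : j ≤ N) : |e j| ≤ σ + (1 + a₀) * ε := by
  set M := σ + (1 + a₀) * ε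
  have hσ : 0 ≤ σ := (abs_nonneg _).trans hleft
  have hM : σ ≤ M := by
    have : 0 ≤ (1 + a₀) * ε := by positivity
    linarith
  have hbelow (w : ℕ → ℝ) (hleft : |leftRow a₀ w| ≤ σ)
      (hinterior : ∀ j, 1 ≤ j → j < N → |interiorRow κ h d (b j) (c j) j w| < κ * ε * d j)
      (hright : |rightRow a₁ N w| ≤ σ) : 0 ≤ (barrier M ε + w) j := by
    refine nonneg_of_rows_nonneg (b := b) hd hconvex ha₀ ha₁ hratio hκ hh hN hc ?_
      (fun i hi hiN => ?_) ?_ hj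
    · rw [map_add, leftRow_barrier]
      linarith [neg_le_of_abs_le hleft]
    · rw [map_add]
      linarith [neg_lt_of_abs_lt (hinterior i hi hiN),
        le_interiorRow_barrier (κ := κ) (d := d) (β := b i) hh (hσ.trans hM) hε (hc i hi hiN) hi]
    · rw [map_add]
      linarith [neg_le_of_abs_le hright, le_rightRow_barrier (M := M) hε ha₁ hN]
  have hlower := hbelow e hleft hinterior hright
  have hupper := hbelow (-e) (by rwa [map_neg, abs_neg])
    (fun i hi hiN => by rw [map_neg, abs_neg]; exact hinterior i hi hiN)
    (by rwa [map_neg, abs_neg])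
  simp only [Pi.add_apply, Pi.neg_apply] at hlower hupper
  exact abs_le.2 ⟨by linarith [barrier_le (M := M) hε j], by linarith [barrier_le (M := M) hε j]⟩

lemma one_add_inv_mul_dCoef_le {δ α₀ : ℝ} (hδ1 : 1 < δ) (hδ2 : δ < 2) (hα₀ : 1 / (δ - 1) ≤ α₀)
    {n : ℕ} (hn : n + 2 < N) :
    (1 + (α₀ / (1 / N))⁻¹) * dCoef δ (n + 2) ≤ dCoef δ (n + 1) := by
  refine le_trans ?_ (one_add_div_mul_dCoef_le hδ1.le hδ2 n)
  have hinv : α₀⁻¹ ≤ δ - 1 := inv_le_of_inv_le₀ (by linarith) (by rwa [← one_div])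
  have hnN : ((n + 2 : ℕ) : ℝ) ≤ N := by exact_mod_cast hn.le
  have hn0 : (0 : ℝ) < (n + 2 : ℕ) := by positivity
  have hratio : (α₀ / (1 / N : ℝ))⁻¹ ≤ (δ - 1) / (n + 2 : ℕ) :=
    calc (α₀ / (1 / N : ℝ))⁻¹ = α₀⁻¹ / N := by
          rw [div_div_eq_mul_div, div_one, mul_inv, ← div_eq_mul_inv]
      _ ≤ (δ - 1) / N := by gcongr
      _ ≤ (δ - 1) / (n + 2 : ℕ) := div_le_div_of_nonneg_left (by linarith) hn0 hnN
  have := (dCoef_pos hδ1.le hδ2 (by omega : 1 ≤ n + 2)).le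
  gcongr

theorem abs_le_mul_rpow_of_abs_rows_le {δ α₀ α₁ T : ℝ} {e : ℕ → ℝ} (hδ1 : 1 < δ) (hδ2 : δ < 2)
    (hα₀ : 1 / (δ - 1) ≤ α₀) (hα₁ : 0 ≤ α₁) (hT : 0 ≤ T) (hN : 0 < N)
    (hc : ∀ j, 1 ≤ j → j < N → 0 ≤ c j)
    (hleft : |leftRow (α₀ / (1 / N)) e| ≤ T * (1 / N : ℝ) ^ (δ - 1))
    (hinterior : ∀ j, 1 ≤ j → j < N →
      |interiorRow (1 / ((1 / N : ℝ) ^ δ * Real.Gamma (3 - δ))) (1 / N) (dCoef δ) (b j) (c j) j e| ≤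
        T * (j : ℝ) ^ (1 - δ))
    (hright : |rightRow (α₁ / (1 / N)) N e| ≤ T * (1 / N : ℝ) ^ (δ - 1)) {j : ℕ} (hj : j ≤ N) :
    |e j| ≤ (T + (T + 1) * Real.Gamma (3 - δ) / (2 - δ) * (1 + α₀)) * (1 / N : ℝ) ^ (δ - 1) := by
  have hG : 0 < Real.Gamma (3 - δ) := Real.Gamma_pos_of_pos (by linarith)
  have hα₀pos : 0 < α₀ := (one_div_pos.2 (sub_pos.2 hδ1)).trans_le hα₀
  have hN' : (1 : ℝ) ≤ N := by exact_mod_cast hN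
  have h2δ : 0 < 2 - δ := by linarith
  set h : ℝ := 1 / N
  have hh : 0 < h := by positivity
  have hh1 : h ≤ 1 := (div_le_one (by linarith)).2 hN'
  set K := (T + 1) * Real.Gamma (3 - δ) / (2 - δ) with hK
  have hpow : h ^ δ = h ^ (δ - 1) * h := by rw [← Real.rpow_add_one hh.ne', sub_add_cancel]
  have hstab := abs_le_of_abs_rows_le (κ := 1 / (h ^ δ * Real.Gamma (3 - δ))) (b := b)
    (ε := K * h ^ δ) (fun r => (dCoef_pos hδ1.le hδ2 r.succ_pos).le)
    (two_mul_dCoef_le_add hδ1.le hδ2) (by positivity) (by positivity)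
    (fun n hn => one_add_inv_mul_dCoef_le hδ1 hδ2 hα₀ hn)
    (by positivity) hh.le hN hc (by positivity) hleft (fun i hi hiN => ?_) hright hj
  · refine hstab.trans ?_
    calc T * h ^ (δ - 1) + (1 + α₀ / h) * (K * h ^ δ)
        = (T + K * (h + α₀)) * h ^ (δ - 1) := by rw [hpow]; field_simp
      _ ≤ (T + K * (1 + α₀)) * h ^ (δ - 1) := by gcongr
  · have : (0 : ℝ) < i := by exact_mod_cast hi
    have hipow : 0 < (i : ℝ) ^ (1 - δ) := by positivity
    calc _ ≤ T * (i : ℝ) ^ (1 - δ) := hinterior i hi hiN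
      _ < (T + 1) * (i : ℝ) ^ (1 - δ) := by linarith
      _ = (T + 1) / (2 - δ) * ((2 - δ) * (i : ℝ) ^ (1 - δ)) := by field_simp
      _ ≤ (T + 1) / (2 - δ) * dCoef δ i := by
        gcongr
        exact mul_rpow_le_dCoef hδ1.le hδ2 hi
      _ = 1 / (h ^ δ * Real.Gamma (3 - δ)) * (K * h ^ δ) * dCoef δ i := by rw [hK]; field_simp

end Scheme

section DifferenceQuotients

variable {f f' f'' : ℝ → ℝ} {x y : ℝ}

lemma abs_sub_le_sub_of_abs_hasDerivAt_le {g g' : ℝ → ℝ} (hxy : x ≤ y)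
    (hf : ContinuousOn f (Icc x y)) (hg : ContinuousOn g (Icc x y))
    (hf' : ∀ t ∈ Ioo x y, HasDerivAt f (f' t) t) (hg' : ∀ t ∈ Ioo x y, HasDerivAt g (g' t) t)
    (hle : ∀ t ∈ Ioo x y, |f' t| ≤ g' t) : |f y - f x| ≤ g y - g x := by
  have hsub : g x - f x ≤ g y - f y := by
    refine monotoneOn_of_hasDerivWithinAt_nonneg (convex_Icc x y) (hg.sub hf)
      (f' := fun t => g' t - f' t) (fun t ht => ?_) (fun t ht => ?_)
      (left_mem_Icc.2 hxy) (right_mem_Icc.2 hxy) hxy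
    all_goals rw [interior_Icc] at ht
    · exact ((hg' t ht).sub (hf' t ht)).hasDerivWithinAt
    · linarith [le_of_abs_le (hle t ht)]
  have hadd : g x + f x ≤ g y + f y := by
    refine monotoneOn_of_hasDerivWithinAt_nonneg (convex_Icc x y) (hg.add hf)
      (f' := fun t => g' t + f' t) (fun t ht => ?_) (fun t ht => ?_)
      (left_mem_Icc.2 hxy) (right_mem_Icc.2 hxy) hxy
    all_goals rw [interior_Icc] at ht
    · exact ((hg' t ht).add (hf' t ht)).hasDerivWithinAt
    · linarith [neg_le_of_abs_le (hle t ht)]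
  exact abs_le.2 ⟨by linarith, by linarith⟩

lemma abs_sub_le_rpow_sub_of_abs_hasDerivAt_le {a C : ℝ} (ha : 0 < a) (ha1 : a ≤ 1) (hC : 0 ≤ C)
    (hx : 0 ≤ x) (hxy : x ≤ y) (hf : ContinuousOn f (Icc x y))
    (hf' : ∀ t ∈ Ioo x y, HasDerivAt f (f' t) t)
    (hle : ∀ t ∈ Ioo x y, |f' t| ≤ C * t ^ (a - 1)) : |f y - f x| ≤ C / a * (y - x) ^ a := by
  have hprimitive : |f y - f x| ≤ C / a * y ^ a - C / a * x ^ a := by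
    refine abs_sub_le_sub_of_abs_hasDerivAt_le (g := fun t => C / a * t ^ a) hxy hf
      ((continuous_id.rpow_const fun _ => Or.inr ha.le).const_mul _).continuousOn hf'
      (fun t ht => ?_) hle
    have hderiv := (Real.hasDerivAt_rpow_const (p := a)
      (Or.inl (hx.trans_lt ht.1).ne')).const_mul (C / a)
    rwa [← mul_assoc, div_mul_cancel₀ _ ha.ne'] at hderiv
  have hsubadd : y ^ a ≤ x ^ a + (y - x) ^ a := by
    simpa using Real.rpow_add_le_add_rpow hx (sub_nonneg.2 hxy) ha.le ha1
  calc |f y - f x| ≤ C / a * (y ^ a - x ^ a) := by rwa [mul_sub]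
    _ ≤ C / a * (y - x) ^ a := by gcongr; linarith

lemma abs_diffQuotient_sub_le {L ε : ℝ} (hxy : x < y) (hf : ContinuousOn f (Icc x y))
    (hf' : ∀ t ∈ Ioo x y, HasDerivAt f (f' t) t) (hL : ∀ t ∈ Ioo x y, |f' t - L| ≤ ε) :
    |(f y - f x) / (y - x) - L| ≤ ε := by
  obtain ⟨ξ, hξ, hslope⟩ := exists_hasDerivAt_eq_slope f f' hxy hf hf'
  rw [← hslope]
  exact hL ξ hξ

lemma exists_hasDerivAt_eq_secondDiff {h : ℝ} (hh : 0 < h) (hf : ContinuousOn f (Icc x (x + 2 * h)))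
    (hf' : ∀ t ∈ Ioo x (x + 2 * h), HasDerivAt f (f' t) t)
    (hf'' : ∀ t ∈ Ioo x (x + 2 * h), HasDerivAt f' (f'' t) t) :
    ∃ ξ ∈ Ioo x (x + 2 * h), f'' ξ = (f (x + 2 * h) - 2 * f (x + h) + f x) / h ^ 2 := by
  have hshift {t : ℝ} (ht : t ∈ Ioo x (x + h)) : t + h ∈ Ioo x (x + 2 * h) :=
    ⟨by linarith [ht.1], by linarith [ht.2]⟩
  obtain ⟨η, hη, hfirst⟩ := exists_hasDerivAt_eq_slope (fun s => f (s + h) - f s)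
    (fun s => f' (s + h) - f' s) (by linarith : x < x + h)
    (ContinuousOn.sub (hf.comp (by fun_prop) fun s hs => ⟨by linarith [hs.1], by linarith [hs.2]⟩)
      (hf.mono (Icc_subset_Icc le_rfl (by linarith))))
    fun s hs => ((hf' _ (hshift hs)).comp_add_const s h).sub
      (hf' s ⟨hs.1, by linarith [hs.2]⟩)
  have hIcc : Icc η (η + h) ⊆ Ioo x (x + 2 * h) := fun t ht =>
    ⟨hη.1.trans_le ht.1, ht.2.trans_lt (hshift hη).2⟩
  obtain ⟨ξ, hξ, hsecond⟩ := exists_hasDerivAt_eq_slope f' f'' (by linarith : η < η + h)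
    (fun t ht => (hf'' t (hIcc ht)).continuousAt.continuousWithinAt)
    fun t ht => hf'' t (hIcc (Ioo_subset_Icc_self ht))
  refine ⟨ξ, hIcc (Ioo_subset_Icc_self hξ), ?_⟩
  rw [hsecond, hfirst, add_sub_cancel_left, add_sub_cancel_left, div_div, ← sq, add_assoc x h h,
    ← two_mul]
  congr 1
  ring

end DifferenceQuotients

section WeakSingularity

lemma contDiffOn_du {u : ℝ → ℝ} {m n : WithTop ℕ∞} (hmn : m + 1 ≤ n)
    (hu : ContDiffOn ℝ n u (Ioc 0 1)) : ContDiffOn ℝ m (du u) (Ioc 0 1) := by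
  refine (hu.derivWithin (uniqueDiffOn_Ioc 0 1) hmn).congr fun x hx => derivWithin_congr_set ?_
  filter_upwards [lt_mem_nhds hx.1] with t ht
  exact propext ⟨fun h => ⟨ht, h.2⟩, fun h => ⟨ht.le, h.2⟩⟩

lemma hasDerivAt_du {u : ℝ → ℝ} {n : WithTop ℕ∞} (hn : 1 ≤ n) (hu : ContDiffOn ℝ n u (Ioc 0 1))
    {x : ℝ} (hx : x ∈ Ioo (0 : ℝ) 1) : HasDerivAt u (du u x) x := by
  have hdiff := (hu.of_le hn).differentiableOn one_ne_zero x ⟨hx.1, hx.2.le⟩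
  rw [du, derivWithin_of_mem_nhds (Icc_mem_nhds hx.1 hx.2)]
  exact (hdiff.differentiableAt (Ioc_mem_nhds hx.1 hx.2)).hasDerivAt

/-- The regularity of solutions of the Caputo problem: `C¹` up to `0`, with second and third
derivatives that blow up at `0` at most like `C₀ * x ^ (δ - 2)` and `C₀ * x ^ (δ - 3)`. Smoothness
away from `0` is recorded only as far as the error analysis needs it, on the open interval. -/
structure IsWeaklySingular (δ C₀ : ℝ) (u : ℝ → ℝ) : Prop where
  continuousOn : ContinuousOn u (Icc 0 1)
  continuousOn_du : ContinuousOn (du u) (Icc 0 1)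
  hasDerivAt : ∀ x ∈ Ioo (0 : ℝ) 1, HasDerivAt u (du u x) x
  hasDerivAt_du : ∀ x ∈ Ioo (0 : ℝ) 1, HasDerivAt (du u) (du (du u) x) x
  hasDerivAt_du_du : ∀ x ∈ Ioo (0 : ℝ) 1, HasDerivAt (du (du u)) (du (du (du u)) x) x
  abs_du_du_le : ∀ x ∈ Ioo (0 : ℝ) 1, |du (du u) x| ≤ C₀ * x ^ (δ - 2)
  abs_du_du_du_le : ∀ x ∈ Ioo (0 : ℝ) 1, |du (du (du u)) x| ≤ C₀ * x ^ (δ - 3)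

namespace IsWeaklySingular

variable {δ C₀ : ℝ} {u : ℝ → ℝ}

lemma of_contDiffOn (hu1 : ContDiffOn ℝ 1 u (Icc 0 1)) (hu3 : ContDiffOn ℝ 3 u (Ioc 0 1))
    (hu2b : ∀ x ∈ Ioc (0 : ℝ) 1, |du (du u) x| ≤ C₀ * x ^ (δ - 2))
    (hu3b : ∀ x ∈ Ioc (0 : ℝ) 1, |du (du (du u)) x| ≤ C₀ * x ^ (δ - 3)) :
    IsWeaklySingular δ C₀ u := by
  have hdu : ContDiffOn ℝ 2 (du u) (Ioc 0 1) := contDiffOn_du (by norm_num) hu3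
  have hdudu : ContDiffOn ℝ 1 (du (du u)) (Ioc 0 1) := contDiffOn_du (by norm_num) hdu
  exact
    { continuousOn := hu1.continuousOn
      continuousOn_du := hu1.continuousOn_derivWithin (uniqueDiffOn_Icc one_pos) le_rfl
      hasDerivAt := fun x => _root_.hasDerivAt_du (by norm_num) hu3
      hasDerivAt_du := fun x => _root_.hasDerivAt_du (by norm_num) hdu
      hasDerivAt_du_du := fun x => _root_.hasDerivAt_du le_rfl hdudu
      abs_du_du_le := fun x hx => hu2b x (Ioo_subset_Ioc_self hx)
      abs_du_du_du_le := fun x hx => hu3b x (Ioo_subset_Ioc_self hx) }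

lemma nonneg (hu : IsWeaklySingular δ C₀ u) : 0 ≤ C₀ := by
  have hhalf := (abs_nonneg _).trans (hu.abs_du_du_le (1 / 2) ⟨by norm_num, by norm_num⟩)
  exact nonneg_of_mul_nonneg_left hhalf (by positivity)

lemma abs_du_sub_le (hu : IsWeaklySingular δ C₀ u) (hδ1 : 1 < δ) (hδ2 : δ ≤ 2) {x y : ℝ}
    (hx : x ∈ Icc (0 : ℝ) 1) (hy : y ∈ Icc (0 : ℝ) 1) :
    |du u y - du u x| ≤ C₀ / (δ - 1) * |y - x| ^ (δ - 1) := by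
  wlog hxy : x ≤ y generalizing x y
  · rw [abs_sub_comm, abs_sub_comm y]
    exact this hy hx (le_of_not_ge hxy)
  have hsub : Ioo x y ⊆ Ioo 0 1 := Ioo_subset_Ioo hx.1 hy.2
  rw [abs_of_nonneg (sub_nonneg.2 hxy)]
  refine abs_sub_le_rpow_sub_of_abs_hasDerivAt_le (by linarith) (by linarith) hu.nonneg hx.1 hxy
    (hu.continuousOn_du.mono (Icc_subset_Icc hx.1 hy.2))
    (fun t ht => hu.hasDerivAt_du t (hsub ht)) fun t ht => ?_
  rw [show δ - 1 - 1 = δ - 2 by ring]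
  exact hu.abs_du_du_le t (hsub ht)

lemma abs_diffQuotient_sub_du_le (hu : IsWeaklySingular δ C₀ u) (hδ1 : 1 < δ) (hδ2 : δ ≤ 2)
    {x y z : ℝ} (hx : 0 ≤ x) (hxy : x < y) (hy : y ≤ 1) (hz : z ∈ Icc x y) :
    |(u y - u x) / (y - x) - du u z| ≤ C₀ / (δ - 1) * (y - x) ^ (δ - 1) := by
  have hsub : Icc x y ⊆ Icc 0 1 := Icc_subset_Icc hx hy
  refine _root_.abs_diffQuotient_sub_le hxy (hu.continuousOn.mono hsub)
    (fun t ht => hu.hasDerivAt t (Ioo_subset_Ioo hx hy ht)) fun t ht => ?_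
  have htz : |t - z| ≤ y - x := abs_sub_le_of_le_of_le ht.1.le ht.2.le hz.1 hz.2
  have hC : 0 ≤ C₀ / (δ - 1) := div_nonneg hu.nonneg (by linarith)
  exact (hu.abs_du_sub_le hδ1 hδ2 (hsub hz) (hsub (Ioo_subset_Icc_self ht))).trans
    (mul_le_mul_of_nonneg_left
      (Real.rpow_le_rpow (abs_nonneg _) htz (by linarith)) hC)

lemma abs_secondDiff_zero_le (hu : IsWeaklySingular δ C₀ u) (hδ1 : 1 < δ) (hδ2 : δ ≤ 2) {h : ℝ}
    (hh : 0 < h) (hh1 : 2 * h ≤ 1) :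
    |(u (2 * h) - 2 * u h + u 0) / h ^ 2| ≤ 2 * (C₀ / (δ - 1)) * h ^ (δ - 2) := by
  have hleft := hu.abs_diffQuotient_sub_du_le hδ1 hδ2 le_rfl hh (by linarith)
    (right_mem_Icc.2 hh.le)
  have hright := hu.abs_diffQuotient_sub_du_le hδ1 hδ2 hh.le (by linarith : h < 2 * h) hh1
    (left_mem_Icc.2 (by linarith))
  rw [show 2 * h - h = h by ring] at hright
  rw [sub_zero] at hleft
  have hsplit : (u (2 * h) - 2 * u h + u 0) / h ^ 2 =
      (((u (2 * h) - u h) / h - du u h) - ((u h - u 0) / h - du u h)) / h := by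
    field_simp
    ring
  have hpow : h ^ (δ - 2) * h = h ^ (δ - 1) := by
    rw [← Real.rpow_add_one hh.ne']
    ring_nf
  rw [hsplit, abs_div, abs_of_pos hh, div_le_iff₀ hh, mul_assoc, hpow]
  linarith [abs_sub ((u (2 * h) - u h) / h - du u h) ((u h - u 0) / h - du u h)]

lemma abs_du_du_sub_secondDiff_le (hu : IsWeaklySingular δ C₀ u) (hδ : δ ≤ 3) {a h t : ℝ}
    (ha : 0 < a) (hh : 0 < h) (hah : a + 2 * h ≤ 1) (ht : t ∈ Ioo a (a + 2 * h)) :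
    |du (du u) t - (u (a + 2 * h) - 2 * u (a + h) + u a) / h ^ 2| ≤
      C₀ * a ^ (δ - 3) * (2 * h) := by
  have hsub : Ioo a (a + 2 * h) ⊆ Ioo 0 1 := Ioo_subset_Ioo ha.le hah
  obtain ⟨ξ, hξ, hsecond⟩ := exists_hasDerivAt_eq_secondDiff hh
    (hu.continuousOn.mono (Icc_subset_Icc ha.le hah)) (fun s hs => hu.hasDerivAt s (hsub hs))
    fun s hs => hu.hasDerivAt_du s (hsub hs)
  have hlip : |du (du u) t - du (du u) ξ| ≤ C₀ * a ^ (δ - 3) * |t - ξ| := by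
    refine Convex.norm_image_sub_le_of_norm_hasDerivWithin_le
      (fun s hs => (hu.hasDerivAt_du_du s (hsub hs)).hasDerivWithinAt) (fun s hs => ?_)
      (convex_Ioo a (a + 2 * h)) hξ ht
    exact (hu.abs_du_du_du_le s (hsub hs)).trans (mul_le_mul_of_nonneg_left
      (Real.rpow_le_rpow_of_nonpos ha hs.1.le (by linarith)) hu.nonneg)
  have hdist : |t - ξ| ≤ 2 * h := by
    simpa using abs_sub_le_of_le_of_le ht.1.le ht.2.le hξ.1.le hξ.2.le
  have := hu.nonneg
  rw [← hsecond]
  exact hlip.trans (by gcongr)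

end IsWeaklySingular

end WeakSingularity

section Consistency

variable {δ : ℝ}

lemma mul_half_rpow_mul_rpow_neg_le {a h y : ℝ} (ha : -1 ≤ a) (hh : 0 < h) (hy : 0 ≤ y) :
    (y * h / 2) ^ a * h ^ (-a) ≤ 2 * y ^ a :=
  calc (y * h / 2) ^ a * h ^ (-a) ≤ 2 ^ (1 : ℝ) * (y * h) ^ a * h ^ (-a) := by
        gcongr
        exact half_rpow_le (by positivity) ha
    _ = 2 * y ^ a := by
        rw [Real.mul_rpow hy hh.le, Real.rpow_one, mul_assoc, mul_assoc, ← Real.rpow_add hh,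
          add_neg_cancel, Real.rpow_zero, mul_one]

variable {C C₁ C₂ h : ℝ} {j : ℕ} {q : ℝ → ℝ} {Q : ℕ → ℝ}

lemma abs_integral_first_cell_le (hδ1 : 1 < δ) (hδ2 : δ < 2) (hC : 0 ≤ C) (hh : 0 < h)
    (hj : 1 ≤ j) (hq : ∀ t ∈ Ioo 0 (j * h), |q t| ≤ C * t ^ (δ - 2)) :
    |∫ t in 0..h, (j * h - t) ^ (1 - δ) * q t| ≤
      C * (2 / (δ - 1) + 2 / (2 - δ)) * (j : ℝ) ^ (1 - δ) := by
  have hj1 : (1 : ℝ) ≤ j := by exact_mod_cast hj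
  have hhj : h ≤ j * h := le_mul_of_one_le_left hh.le hj1
  have : 0 < δ - 1 := by linarith
  have : 0 < 2 - δ := by linarith
  have hcell : ∫ t in 0..h, (j * h - t) ^ (1 - δ) = h ^ (2 - δ) / (2 - δ) * dCoef δ j := by
    simpa using integral_cell_eq_dCoef hδ2 hh.le hj
  have hfar : (j * h / 2) ^ (1 - δ) * h ^ (δ - 1) ≤ 2 * (j : ℝ) ^ (1 - δ) := by
    simpa using mul_half_rpow_mul_rpow_neg_le (a := 1 - δ) (by linarith) hh j.cast_nonneg
  have hnear : (j * h / 2) ^ (δ - 2) * h ^ (2 - δ) ≤ 2 := by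
    have hscaled := mul_half_rpow_mul_rpow_neg_le (a := δ - 2) (by linarith) hh j.cast_nonneg
    rw [neg_sub] at hscaled
    linarith [Real.rpow_le_one_of_one_le_of_nonpos hj1 (by linarith : δ - 2 ≤ 0)]
  calc |∫ t in 0..h, (j * h - t) ^ (1 - δ) * q t|
      ≤ ∫ t in 0..h, C * betaMajorant (1 - δ) (δ - 2) (j * h) t :=
        abs_integral_le_of_abs_le_on_Ioo hh.le
          (fun t ht => abs_sub_rpow_mul_le_betaMajorant (by linarith) (by linarith) hC hq
            ⟨ht.1, ht.2.trans_le hhj⟩)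
          ((intervalIntegrable_betaMajorant (by linarith) (by linarith) _ _ _).const_mul C)
    _ = C * ((j * h / 2) ^ (1 - δ) * h ^ (δ - 1) / (δ - 1) +
          (j * h / 2) ^ (δ - 2) * h ^ (2 - δ) / (2 - δ) * dCoef δ j) := by
        rw [intervalIntegral.integral_const_mul,
          integral_betaMajorant (by linarith) (by linarith), hcell,
          show δ - 2 + 1 = δ - 1 by ring]
        ring
    _ ≤ C * (2 * (j : ℝ) ^ (1 - δ) / (δ - 1) + 2 / (2 - δ) * (j : ℝ) ^ (1 - δ)) := by
        gcongr
        · exact (dCoef_pos hδ1.le hδ2 hj).le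
        · exact dCoef_le_rpow hδ1.le hδ2 hj
    _ = _ := by ring

lemma abs_integral_cell_sub_le {k : ℕ} (hδ : δ < 2) (hh : 0 < h) (hkj : k < j)
    (hint : IntervalIntegrable (fun t => (j * h - t) ^ (1 - δ) * q t) volume
      (k * h) ((k + 1 : ℕ) * h))
    (hQ : ∀ t ∈ Ioo (k * h) ((k + 1 : ℕ) * h),
      |q t - Q k| ≤ C₂ * (h ^ (δ - 2) * (k : ℝ) ^ (δ - 3))) :
    |(∫ t in (k * h)..((k + 1 : ℕ) * h), (j * h - t) ^ (1 - δ) * q t) -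
        h ^ (2 - δ) / (2 - δ) * (dCoef δ (j - k) * Q k)| ≤
      C₂ / (2 - δ) * ((k : ℝ) ^ (δ - 3) * dCoef δ (j - k)) := by
  have hnode : ((k + 1 : ℕ) : ℝ) * h ≤ j * h :=
    mul_le_mul_of_nonneg_right (by exact_mod_cast hkj) hh.le
  have hcell := abs_integral_sub_rpow_mul_sub_le (a := 1 - δ) (by linarith)
    (mul_le_mul_of_nonneg_right (by exact_mod_cast k.le_succ) hh.le) hnode hQ hint
  rw [integral_cell_eq_dCoef hδ hh.le hkj, mul_assoc] at hcell
  have hcancel : h ^ (2 - δ) * h ^ (δ - 2) = 1 := by rw [← Real.rpow_add hh]; simp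
  refine hcell.trans_eq ?_
  linear_combination (C₂ / (2 - δ) * (k : ℝ) ^ (δ - 3) * dCoef δ (j - k)) * hcancel

lemma abs_integral_first_cell_sub_le (hδ1 : 1 < δ) (hδ2 : δ < 2) (hC : 0 ≤ C) (hh : 0 < h)
    (hj : 1 ≤ j) (hq : ∀ t ∈ Ioo 0 (j * h), |q t| ≤ C * t ^ (δ - 2))
    (hQ : |Q 0| ≤ C₁ * h ^ (δ - 2)) :
    |(∫ t in 0..h, (j * h - t) ^ (1 - δ) * q t) - h ^ (2 - δ) / (2 - δ) * (dCoef δ j * Q 0)| ≤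
      (C * (2 / (δ - 1) + 2 / (2 - δ)) + C₁ / (2 - δ)) * (j : ℝ) ^ (1 - δ) := by
  have : 0 < 2 - δ := by linarith
  have hd := (dCoef_pos hδ1.le hδ2 hj).le
  have hC₁ : 0 ≤ C₁ := nonneg_of_mul_nonneg_left ((abs_nonneg _).trans hQ) (by positivity)
  have hcancel : h ^ (2 - δ) * h ^ (δ - 2) = 1 := by rw [← Real.rpow_add hh]; simp
  have hdiscrete : |h ^ (2 - δ) / (2 - δ) * (dCoef δ j * Q 0)| ≤
      C₁ / (2 - δ) * (j : ℝ) ^ (1 - δ) :=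
    calc |h ^ (2 - δ) / (2 - δ) * (dCoef δ j * Q 0)|
        = h ^ (2 - δ) / (2 - δ) * (dCoef δ j * |Q 0|) := by
          rw [abs_mul, abs_mul, abs_of_nonneg hd, abs_of_pos (by positivity)]
      _ ≤ h ^ (2 - δ) / (2 - δ) * (dCoef δ j * (C₁ * h ^ (δ - 2))) := by gcongr
      _ = C₁ / (2 - δ) * dCoef δ j := by
          linear_combination (C₁ / (2 - δ) * dCoef δ j) * hcancel
      _ ≤ C₁ / (2 - δ) * (j : ℝ) ^ (1 - δ) := by
          gcongr
          exact dCoef_le_rpow hδ1.le hδ2 hj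
  rw [add_mul]
  exact (abs_sub _ _).trans
    (add_le_add (abs_integral_first_cell_le hδ1 hδ2 hC hh hj hq) hdiscrete)

theorem exists_abs_integral_sub_sum_dCoef_le (hδ1 : 1 < δ) (hδ2 : δ < 2) (hC : 0 ≤ C)
    (hC₁ : 0 ≤ C₁) (hC₂ : 0 ≤ C₂) :
    ∃ T : ℝ, 0 ≤ T ∧ ∀ (h : ℝ) (j : ℕ) (q : ℝ → ℝ) (Q : ℕ → ℝ), 0 < h → 1 ≤ j →
      ContinuousOn q (Ioo 0 (j * h)) → (∀ t ∈ Ioo 0 (j * h), |q t| ≤ C * t ^ (δ - 2)) →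
      |Q 0| ≤ C₁ * h ^ (δ - 2) →
      (∀ k : ℕ, 1 ≤ k → k < j → ∀ t ∈ Ioo (k * h) ((k + 1 : ℕ) * h),
        |q t - Q k| ≤ C₂ * (h ^ (δ - 2) * (k : ℝ) ^ (δ - 3))) →
      |(∫ t in 0..(j * h), (j * h - t) ^ (1 - δ) * q t) -
          h ^ (2 - δ) / (2 - δ) * ∑ k ∈ Finset.range j, dCoef δ (j - k) * Q k| ≤
        T * (j : ℝ) ^ (1 - δ) := by
  obtain ⟨Z, hZ, hsum⟩ := exists_sum_rpow_mul_dCoef_le (β := δ - 3) (by linarith) hδ1.le hδ2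
  have : 0 < δ - 1 := by linarith
  have : 0 < 2 - δ := by linarith
  refine ⟨C * (2 / (δ - 1) + 2 / (2 - δ)) + C₁ / (2 - δ) + C₂ / (2 - δ) * Z, by positivity,
    fun h j q Q hh hj hqc hq hQ₀ hQ => ?_⟩
  set g : ℝ → ℝ := fun t => (j * h - t) ^ (1 - δ) * q t
  have hint : IntervalIntegrable g volume 0 (j * h) := intervalIntegrable_sub_rpow_mul
    (by linarith) (by linarith) (by linarith) (by linarith) hC (by positivity) hqc hq
  have hintcell (k : ℕ) (hk : k < j) :
      IntervalIntegrable g volume (k * h) ((k + 1 : ℕ) * h) := by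
    have hk' : ((k + 1 : ℕ) : ℝ) ≤ j := by exact_mod_cast hk
    refine hint.mono_set (uIcc_subset_uIcc ?_ ?_)
    all_goals exact mem_uIcc_of_le (by positivity) (by gcongr)
  have hcells : ∫ t in 0..(j * h), g t =
      ∑ k ∈ Finset.range j, ∫ t in (k * h)..((k + 1 : ℕ) * h), g t := by
    rw [intervalIntegral.sum_integral_adjacent_intervals (a := fun k : ℕ => k * h) hintcell]
    simp
  rw [hcells, Finset.mul_sum, ← Finset.sum_sub_distrib, Finset.sum_range_eq_add_Ico _ hj]
  have hfirst := abs_integral_first_cell_sub_le hδ1 hδ2 hC hh hj hq hQ₀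
  have hrest : |∑ k ∈ Finset.Ico 1 j, ((∫ t in (k * h)..((k + 1 : ℕ) * h), g t) -
      h ^ (2 - δ) / (2 - δ) * (dCoef δ (j - k) * Q k))| ≤
        C₂ / (2 - δ) * (Z * (j : ℝ) ^ (1 - δ)) := by
    refine (Finset.abs_sum_le_sum_abs _ _).trans ((Finset.sum_le_sum fun k hk => ?_).trans
      ((Finset.mul_sum _ _ _).symm.trans_le
        (mul_le_mul_of_nonneg_left (hsum j hj) (by positivity))))
    obtain ⟨hk1, hkj⟩ := Finset.mem_Ico.1 hk
    exact abs_integral_cell_sub_le hδ2 hh hkj (hintcell k hkj) (hQ k hk1 hkj)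
  simp only [Nat.cast_zero, zero_mul, zero_add, Nat.cast_one, one_mul, Nat.sub_zero]
  exact (abs_add_le _ _).trans (by linarith)

lemma scaled_convSecondDiff_eq (hδ : δ < 2) (hh : 0 < h) (d v : ℕ → ℝ) (j : ℕ) :
    1 / (h ^ δ * Real.Gamma (3 - δ)) * convSecondDiff d j v =
      1 / Real.Gamma (2 - δ) * (h ^ (2 - δ) / (2 - δ) *
        ∑ k ∈ Finset.range j, d (j - k) * ((v (k + 2) - 2 * v (k + 1) + v k) / h ^ 2)) := by
  have hδ2 : 2 - δ ≠ 0 := by linarith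
  have hGamma : Real.Gamma (3 - δ) = (2 - δ) * Real.Gamma (2 - δ) := by
    rw [← Real.Gamma_add_one hδ2]
    ring_nf
  have hG : 0 < Real.Gamma (2 - δ) := Real.Gamma_pos_of_pos (by linarith)
  simp only [← mul_div_assoc, ← Finset.sum_div, ← convSecondDiff_apply]
  rw [hGamma, Real.rpow_sub hh, Real.rpow_two]
  field_simp

namespace IsWeaklySingular

variable {C₀ : ℝ} {u : ℝ → ℝ}

lemma abs_du_du_sub_secondDiff_node_le (hu : IsWeaklySingular δ C₀ u) (hδ : δ ≤ 3) (hh : 0 < h)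
    {k : ℕ} (hk : 1 ≤ k) (hk1 : (k + 2 : ℕ) * h ≤ 1) {t : ℝ}
    (ht : t ∈ Ioo (k * h) ((k + 1 : ℕ) * h)) :
    |du (du u) t - (u ((k + 2 : ℕ) * h) - 2 * u ((k + 1 : ℕ) * h) + u (k * h)) / h ^ 2| ≤
      2 * C₀ * (h ^ (δ - 2) * (k : ℝ) ^ (δ - 3)) := by
  have hk0 : (0 : ℝ) < k := by exact_mod_cast hk
  have hnode₁ : ((k + 1 : ℕ) : ℝ) * h = k * h + h := by push_cast; ring
  have hnode₂ : ((k + 2 : ℕ) : ℝ) * h = k * h + 2 * h := by push_cast; ring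
  rw [hnode₁] at ht ⊢
  rw [hnode₂] at hk1 ⊢
  refine (hu.abs_du_du_sub_secondDiff_le hδ (by positivity) hh hk1
    ⟨ht.1, by linarith [ht.2]⟩).trans_eq ?_
  rw [Real.mul_rpow hk0.le hh.le, show δ - 2 = δ - 3 + 1 by ring, Real.rpow_add_one hh.ne']
  ring

theorem exists_abs_caputoW_sub_convSecondDiff_le (hu : IsWeaklySingular δ C₀ u) (hδ1 : 1 < δ)
    (hδ2 : δ < 2) :
    ∃ T : ℝ, 0 ≤ T ∧ ∀ (h : ℝ) (j : ℕ), 0 < h → 1 ≤ j → (j + 1 : ℕ) * h ≤ 1 →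
      |caputoW δ u (j * h) - 1 / (h ^ δ * Real.Gamma (3 - δ)) *
          convSecondDiff (dCoef δ) j (fun k => u (k * h))| ≤ T * (j : ℝ) ^ (1 - δ) := by
  have : 0 < Real.Gamma (2 - δ) := Real.Gamma_pos_of_pos (by linarith)
  have hC₀ := hu.nonneg
  obtain ⟨T, hT, hquad⟩ := exists_abs_integral_sub_sum_dCoef_le hδ1 hδ2 hC₀
    (C₁ := 2 * (C₀ / (δ - 1))) (C₂ := 2 * C₀)
    (mul_nonneg zero_le_two (div_nonneg hC₀ (by linarith))) (by positivity)
  refine ⟨1 / Real.Gamma (2 - δ) * T, by positivity, fun h j hh hj hjh => ?_⟩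
  have hnode {k : ℕ} (hk : k ≤ j + 1) : (k : ℝ) * h ≤ 1 :=
    le_trans (by gcongr) hjh
  have hsub : Ioo 0 (j * h) ⊆ Ioo (0 : ℝ) 1 := Ioo_subset_Ioo le_rfl (hnode j.le_succ)
  set Q : ℕ → ℝ := fun k => (u ((k + 2 : ℕ) * h) - 2 * u ((k + 1 : ℕ) * h) + u (k * h)) / h ^ 2
  have hQ₀ : |Q 0| ≤ 2 * (C₀ / (δ - 1)) * h ^ (δ - 2) := by
    have h2h : 2 * h ≤ 1 := by exact_mod_cast hnode (Nat.succ_le_succ hj)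
    simpa [Q] using hu.abs_secondDiff_zero_le hδ1 hδ2.le hh h2h
  have herror := hquad h j (du (du u)) Q hh hj
    (fun t ht => (hu.hasDerivAt_du_du t (hsub ht)).continuousAt.continuousWithinAt)
    (fun t ht => hu.abs_du_du_le t (hsub ht)) hQ₀ fun k hk hkj t ht =>
      hu.abs_du_du_sub_secondDiff_node_le (by linarith) hh hk (hnode (by omega)) ht
  rw [caputoW, scaled_convSecondDiff_eq hδ2 hh, ← mul_sub, abs_mul,
    abs_of_pos (by positivity), mul_assoc]
  gcongr

lemma abs_upwindDiff_sub_du_le (hu : IsWeaklySingular δ C₀ u) (hδ1 : 1 < δ) (hδ2 : δ ≤ 2)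
    (hh : 0 < h) (hj : 1 ≤ j) (hjh : (j + 1 : ℕ) * h ≤ 1) (β : ℝ) :
    |upwindDiff h β j (fun k => u (k * h)) - du u (j * h)| ≤ C₀ / (δ - 1) * h ^ (δ - 1) := by
  obtain ⟨i, rfl⟩ := Nat.exists_eq_add_of_le' hj
  have hnext : ((i + 1 + 1 : ℕ) : ℝ) * h = (i + 1 : ℕ) * h + h := by push_cast; ring
  have hprev : ((i + 1 : ℕ) : ℝ) * h = i * h + h := by push_cast; ring
  rw [hnext] at hjh
  rcases lt_or_ge β 0 with hβ | hβ
  · have hforward := hu.abs_diffQuotient_sub_du_le hδ1 hδ2 (by positivity)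
      (lt_add_of_pos_right _ hh) hjh (left_mem_Icc.2 (by linarith))
    rw [add_sub_cancel_left, ← hnext] at hforward
    rwa [show upwindDiff h β (i + 1) (fun k => u (k * h)) = _ from if_pos hβ]
  · have hbackward := hu.abs_diffQuotient_sub_du_le hδ1 hδ2 (by positivity)
      (lt_add_of_pos_right (i * h) hh) (by linarith) (right_mem_Icc.2 (by linarith))
    rw [add_sub_cancel_left, ← hprev] at hbackward
    rwa [show upwindDiff h β (i + 1) (fun k => u (k * h)) = _ from if_neg hβ.not_gt]

lemma abs_leftRow_sub_le {α : ℝ} (hu : IsWeaklySingular δ C₀ u) (hδ1 : 1 < δ) (hδ2 : δ ≤ 2)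
    (hα : 0 ≤ α) (hh : 0 < h) (hh1 : h ≤ 1) :
    |leftRow (α / h) (fun k => u (k * h)) - (u 0 - α * du u 0)| ≤
      α * (C₀ / (δ - 1)) * h ^ (δ - 1) := by
  have hquot := hu.abs_diffQuotient_sub_du_le hδ1 hδ2 le_rfl hh hh1 (left_mem_Icc.2 hh.le)
  have hrow : leftRow (α / h) (fun k => u (k * h)) - (u 0 - α * du u 0) =
      -(α * ((u h - u 0) / (h - 0) - du u 0)) := by
    change (1 + α / h) * u ((0 : ℕ) * h) - α / h * u ((1 : ℕ) * h) - _ = _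
    simp only [Nat.cast_zero, zero_mul, Nat.cast_one, one_mul]
    ring
  rw [hrow, abs_neg, abs_mul, abs_of_nonneg hα, mul_assoc]
  rw [sub_zero] at hquot ⊢
  gcongr

lemma abs_rightRow_sub_le {α : ℝ} {N : ℕ} (hu : IsWeaklySingular δ C₀ u) (hδ1 : 1 < δ)
    (hδ2 : δ ≤ 2) (hα : 0 ≤ α) (hh : 0 < h) (hNh : N * h = 1) :
    |rightRow (α / h) N (fun k => u (k * h)) - (u 1 + α * du u 1)| ≤
      α * (C₀ / (δ - 1)) * h ^ (δ - 1) := by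
  have hN : 1 ≤ N := Nat.one_le_iff_ne_zero.2 fun hN => by simp [hN] at hNh
  have hprev : ((N - 1 : ℕ) : ℝ) * h = 1 - h := by
    rw [Nat.cast_sub hN, sub_mul, hNh, Nat.cast_one, one_mul]
  have hh1 : 0 ≤ 1 - h := hprev ▸ by positivity
  have hquot := hu.abs_diffQuotient_sub_du_le hδ1 hδ2 hh1 (sub_lt_self 1 hh) le_rfl
    (right_mem_Icc.2 (by linarith))
  have hrow : rightRow (α / h) N (fun k => u (k * h)) - (u 1 + α * du u 1) =
      α * ((u 1 - u (1 - h)) / h - du u 1) := by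
    change -(α / h) * u ((N - 1 : ℕ) * h) + (1 + α / h) * u (N * h) - _ = _
    rw [hprev, hNh]
    ring
  rw [hrow, abs_mul, abs_of_nonneg hα, mul_assoc]
  rw [sub_sub_cancel] at hquot
  gcongr

theorem exists_abs_interiorRow_sub_le {B : ℝ} (hu : IsWeaklySingular δ C₀ u) (hδ1 : 1 < δ)
    (hδ2 : δ < 2) (hB : 0 ≤ B) :
    ∃ T : ℝ, 0 ≤ T ∧ ∀ (h β γ : ℝ) (j : ℕ), 0 < h → 1 ≤ j → (j + 1 : ℕ) * h ≤ 1 → |β| ≤ B →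
      |interiorRow (1 / (h ^ δ * Real.Gamma (3 - δ))) h (dCoef δ) β γ j (fun k => u (k * h)) -
          (-caputoW δ u (j * h) + β * du u (j * h) + γ * u (j * h))| ≤ T * (j : ℝ) ^ (1 - δ) := by
  obtain ⟨T, hT, hcaputo⟩ := hu.exists_abs_caputoW_sub_convSecondDiff_le hδ1 hδ2
  have hK : 0 ≤ C₀ / (δ - 1) := div_nonneg hu.nonneg (by linarith)
  refine ⟨T + B * (C₀ / (δ - 1)), by positivity, fun h β γ j hh hj hjh hβ => ?_⟩
  have hmesh : h ^ (δ - 1) ≤ (j : ℝ) ^ (1 - δ) := by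
    have hj0 : (0 : ℝ) < j := by exact_mod_cast hj
    have hle : h ≤ (j : ℝ)⁻¹ := by
      rw [← one_div, le_div_iff₀ hj0, mul_comm]
      exact le_trans (by gcongr; omega) hjh
    rw [← neg_sub δ 1, Real.rpow_neg hj0.le, ← Real.inv_rpow hj0.le]
    exact Real.rpow_le_rpow hh.le hle (by linarith)
  set v : ℕ → ℝ := fun k => u (k * h)
  have hsplit : interiorRow (1 / (h ^ δ * Real.Gamma (3 - δ))) h (dCoef δ) β γ j v -
      (-caputoW δ u (j * h) + β * du u (j * h) + γ * u (j * h)) =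
      (caputoW δ u (j * h) - 1 / (h ^ δ * Real.Gamma (3 - δ)) * convSecondDiff (dCoef δ) j v) +
        β * (upwindDiff h β j v - du u (j * h)) := by
    rw [interiorRow_apply]
    ring
  rw [hsplit, add_mul]
  refine (abs_add_le _ _).trans (add_le_add (hcaputo h j hh hj hjh) ?_)
  calc |β * (upwindDiff h β j v - du u (j * h))|
      = |β| * |upwindDiff h β j v - du u (j * h)| := abs_mul _ _
    _ ≤ B * (C₀ / (δ - 1) * h ^ (δ - 1)) := by
        gcongr
        exact hu.abs_upwindDiff_sub_du_le hδ1 hδ2.le hh hj hjh β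
    _ ≤ B * (C₀ / (δ - 1)) * (j : ℝ) ^ (1 - δ) := by rw [← mul_assoc]; gcongr

end IsWeaklySingular

end Consistency

theorem stmt18_general {δ α₀ α₁ γ₀ γ₁ B C₀ : ℝ} {b c f u : ℝ → ℝ} (hδ1 : 1 < δ) (hδ2 : δ < 2)
    (hα₀ : 1 / (δ - 1) ≤ α₀) (hα₁ : 0 ≤ α₁) (hb : ∀ x ∈ Ioo (0 : ℝ) 1, |b x| ≤ B)
    (hc : ∀ x ∈ Ioo (0 : ℝ) 1, 0 ≤ c x) (hu : IsWeaklySingular δ C₀ u)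
    (hode : ∀ x ∈ Ioo (0 : ℝ) 1, -caputoW δ u x + b x * du u x + c x * u x = f x)
    (hbc0 : u 0 - α₀ * du u 0 = γ₀) (hbc1 : u 1 + α₁ * du u 1 = γ₁) :
    ∃ C : ℝ, ∀ N : ℕ, 0 < N → ∀ U : ℕ → ℝ,
      leftRow (α₀ / (1 / N)) U = γ₀ →
      (∀ j : ℕ, 1 ≤ j → j < N →
        interiorRow (1 / ((1 / N : ℝ) ^ δ * Real.Gamma (3 - δ))) (1 / N) (dCoef δ)
          (b (j / N)) (c (j / N)) j U = f (j / N)) →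
      rightRow (α₁ / (1 / N)) N U = γ₁ →
      ∀ j ≤ N, |u (j / N) - U j| ≤ C * (1 / N : ℝ) ^ (δ - 1) := by
  have hB : 0 ≤ B := (abs_nonneg _).trans (hb (1 / 2) ⟨by norm_num, by norm_num⟩)
  have hα₀pos : 0 < α₀ := (one_div_pos.2 (sub_pos.2 hδ1)).trans_le hα₀
  obtain ⟨T, hT, hconsistent⟩ := hu.exists_abs_interiorRow_sub_le hδ1 hδ2 hB
  set K := C₀ / (δ - 1)
  have hK : 0 ≤ K := div_nonneg hu.nonneg (by linarith)
  set T' := T + α₀ * K + α₁ * K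
  have hT' : T ≤ T' ∧ α₀ * K ≤ T' ∧ α₁ * K ≤ T' := by
    have : 0 ≤ α₀ * K := by positivity
    have : 0 ≤ α₁ * K := by positivity
    refine ⟨?_, ?_, ?_⟩ <;> linarith
  refine ⟨T' + (T' + 1) * Real.Gamma (3 - δ) / (2 - δ) * (1 + α₀),
    fun N hN U hleft hinterior hright j hj => ?_⟩
  have hN1 : (1 : ℝ) ≤ N := by exact_mod_cast hN
  set h : ℝ := 1 / N
  have hh : 0 < h := by positivity
  have hNh : N * h = 1 := mul_one_div_cancel (by positivity)
  have hnode (k : ℕ) : (k : ℝ) / N = k * h := by ring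
  simp only [hnode] at hinterior ⊢
  have hmem {i : ℕ} (hi : 1 ≤ i) (hiN : i < N) : (i : ℝ) * h ∈ Ioo (0 : ℝ) 1 :=
    ⟨by positivity, hNh ▸ by gcongr⟩
  refine abs_le_mul_rpow_of_abs_rows_le (e := (fun k : ℕ => u (k * h)) - U) (T := T')
    (b := fun k => b (k * h)) (c := fun k => c (k * h)) hδ1 hδ2 hα₀ hα₁ (hT.trans hT'.1) hN
    (fun i hi hiN => hc _ (hmem hi hiN)) ?_ (fun i hi hiN => ?_) ?_ hj
  · rw [map_sub, hleft, ← hbc0]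
    have hh1 : h ≤ 1 := (div_le_one (by linarith)).2 hN1
    refine (hu.abs_leftRow_sub_le hδ1 hδ2.le hα₀pos.le hh hh1).trans ?_
    exact mul_le_mul_of_nonneg_right hT'.2.1 (by positivity)
  · have hnext : ((i + 1 : ℕ) : ℝ) * h ≤ 1 := hNh ▸ by gcongr; omega
    rw [map_sub, hinterior i hi hiN, ← hode _ (hmem hi hiN)]
    refine (hconsistent h _ _ i hh hi hnext (hb _ (hmem hi hiN))).trans ?_
    exact mul_le_mul_of_nonneg_right hT'.1 (by positivity)
  · rw [map_sub, hright, ← hbc1]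
    refine (hu.abs_rightRow_sub_le hδ1 hδ2.le hα₁ hh hNh).trans ?_
    exact mul_le_mul_of_nonneg_right hT'.2.2 (by positivity)

theorem stmt18 (δ : ℝ) (hδ1 : 1 < δ) (hδ2 : δ < 2)
    (α₀ α₁ γ₀ γ₁ : ℝ) (hα₀ : 1 / (δ - 1) ≤ α₀) (hα₁ : 0 ≤ α₁)
    (b c f : ℝ → ℝ) (hb : ContinuousOn b (Set.Icc 0 1))
    (hcont : ContinuousOn c (Set.Icc 0 1)) (hf : ContinuousOn f (Set.Icc 0 1))
    (hc0 : ∀ x ∈ Set.Icc (0:ℝ) 1, 0 ≤ c x)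
    (u : ℝ → ℝ) (hu1 : ContDiffOn ℝ 1 u (Set.Icc 0 1)) (hu3 : ContDiffOn ℝ 3 u (Set.Ioc 0 1))
    (C₀ : ℝ)
    (hu2b : ∀ x ∈ Set.Ioc (0:ℝ) 1, |du (du u) x| ≤ C₀ * x ^ (δ - 2))
    (hu3b : ∀ x ∈ Set.Ioc (0:ℝ) 1, |du (du (du u)) x| ≤ C₀ * x ^ (δ - 3))
    (hode : ∀ x ∈ Set.Ioo (0:ℝ) 1, -caputoW δ u x + b x * du u x + c x * u x = f x)
    (hbc0 : u 0 - α₀ * du u 0 = γ₀)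
    (hbc1 : u 1 + α₁ * du u 1 = γ₁) :
    ∃ C : ℝ, ∀ N : ℕ, 3 ≤ N → ∀ U : ℕ → ℝ,
      ((1 + α₀ / ((1:ℝ) / N)) * U 0 - (α₀ / ((1:ℝ) / N)) * U 1 = γ₀) →
      (∀ j : ℕ, 1 ≤ j → j ≤ N - 1 →
        -(1 / (((1:ℝ) / N) ^ δ * Real.Gamma (3 - δ))) *
            (∑ k ∈ Finset.range j, dCoef δ (j - k) *
              (U (k + 2) - 2 * U (k + 1) + U k))
          + b ((j:ℝ) / N) *
              (if b ((j:ℝ) / N) < 0 then (U (j + 1) - U j) / ((1:ℝ) / N)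
                else (U j - U (j - 1)) / ((1:ℝ) / N))
          + c ((j:ℝ) / N) * U j = f ((j:ℝ) / N)) →
      (-(α₁ / ((1:ℝ) / N)) * U (N - 1) + (1 + α₁ / ((1:ℝ) / N)) * U N = γ₁) →
      ∀ j : ℕ, j ≤ N → |u ((j:ℝ) / N) - U j| ≤ C * ((1:ℝ) / N) ^ (δ - 1) := by
  obtain ⟨B, hB⟩ := isCompact_Icc.exists_bound_of_continuousOn hb
  obtain ⟨C, hC⟩ := stmt18_general hδ1 hδ2 hα₀ hα₁ (fun x hx => hB x (Ioo_subset_Icc_self hx))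
    (fun x hx => hc0 x (Ioo_subset_Icc_self hx)) (.of_contDiffOn hu1 hu3 hu2b hu3b) hode hbc0 hbc1
  exact ⟨C, fun N hN U hleft hinterior hright =>
    hC N (by omega) U hleft (fun j hj hjN => hinterior j hj (by omega)) hright⟩
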